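/- There exists a POVM on ℂ³ with exactly 8 elements, each of rank at most one, such that the map sending each pure state ρ to its outcome probability vector (tr(ρ F_1),...,tr(ρ F_8)) is injective on the set of pure states; that is, a rank-1 PSIR-complete POVM on ℂ³ with 8 elements exists. -/

import Mathlib

open Matrix BigOperators ComplexOrder

/-- The pure state (rank-one projection) `|φ⟩⟨φ|` associated to a vector `φ`. -/
noncomputable def pureState {d : ℕ} (φ : Fin d → ℂ) : Matrix (Fin d) (Fin d) ℂ :=
  Matrix.vecMulVec φ (star φ)

/-- `φ` is a unit vector. -/
def IsUnitVec {d : ℕ} (φ : Fin d → ℂ) : Prop := star φ ⬝ᵥ φ = 1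

/-!
Two matrices of rank at most one that `F` does not distinguish differ by an `X` of rank at most two
with `tr (X F_k) = 0` for all `k`, so it suffices that every nonzero `X` with this property has rank
three. Take `F_k` proportional to `|v⟩⟨v|`, where `v` runs over the eight vectors `(±a, ±b, 1)` and
`(±b, ±a, 1)`. Averaging `⟨v|X|v⟩ = 0` against the characters of the sign group separates the
diagonal of `X` from each pair `X i j`, `X j i`, and the exchange `a ↔ b` supplies the remaining
equations. For generic `a`, `b` with `|a|² + |b|² = 2` this leaves only the multiples of
`diag(1, 1, -2)`, while the operators `|v⟩⟨v|` add up to eight times the identity.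
-/

section RankCriterion

variable {K m n ι : Type*} [Field K] [Fintype n]

lemma matrix_rank_sub_le (A B : Matrix m n K) : (A - B).rank ≤ A.rank + B.rank := by
  have range_le : LinearMap.range (A - B).mulVecLin ≤
      LinearMap.range A.mulVecLin ⊔ LinearMap.range B.mulVecLin := by
    rintro _ ⟨x, rfl⟩
    rw [mulVecLin_apply, sub_mulVec]
    exact Submodule.sub_mem_sup ⟨x, rfl⟩ ⟨x, rfl⟩
  exact (Submodule.finrank_mono range_le).trans (Submodule.finrank_add_le_finrank_add_finrank _ _)

lemma injOn_trace_mul_of_rank_le [Fintype m] {F : ι → Matrix n m K} {r : ℕ}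
    (hF : ∀ X : Matrix m n K, (∀ k, (X * F k).trace = 0) → X.rank ≤ 2 * r → X = 0) :
    Set.InjOn (fun (A : Matrix m n K) k ↦ (A * F k).trace) {A | A.rank ≤ r} := by
  intro A (hA : A.rank ≤ r) B (hB : B.rank ≤ r) hAB
  refine sub_eq_zero.mp (hF (A - B) (fun k ↦ ?_) ?_)
  · rw [Matrix.sub_mul, trace_sub, sub_eq_zero]
    exact congrFun hAB k
  · have hsub := matrix_rank_sub_le A B
    omega

lemma eq_zero_of_eq_smul_diagonal_of_rank_lt [DecidableEq n] {w : n → K} (hw : ∀ i, w i ≠ 0)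
    {X : Matrix n n K} {x : K} (hX : X = x • diagonal w) (hrank : X.rank < Fintype.card n) :
    X = 0 := by
  by_contra hne
  have hx : x ≠ 0 := by
    rintro rfl
    exact hne (by rw [hX, zero_smul])
  refine hrank.ne (rank_of_det_ne_zero ?_)
  rw [hX, det_smul, det_diagonal]
  exact mul_ne_zero (pow_ne_zero _ hx) (Finset.prod_ne_zero_iff.mpr fun i _ ↦ hw i)

end RankCriterion

section FrameEffect

variable {d : ℕ} {ι : Type*} {N : ℝ}

/-- The rank-one effects `N⁻¹ |v k⟩⟨v k|` of a family of (not necessarily unit) vectors. They form a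
POVM when `v` is a tight frame with frame bound `N`. -/
noncomputable def frameEffect (N : ℝ) (v : ι → Fin d → ℂ) (k : ι) : Matrix (Fin d) (Fin d) ℂ :=
  (N : ℂ)⁻¹ • pureState (v k)

lemma rank_pureState_le (φ : Fin d → ℂ) : (pureState φ).rank ≤ 1 :=
  rank_vecMulVec_le _ _

lemma posSemidef_frameEffect (hN : 0 ≤ N) (v : ι → Fin d → ℂ) (k : ι) :
    (frameEffect N v k).PosSemidef :=
  (posSemidef_vecMulVec_self_star (v k)).smul (inv_nonneg.mpr (Complex.zero_le_real.mpr hN))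

lemma rank_frameEffect_le (N : ℝ) (v : ι → Fin d → ℂ) (k : ι) : (frameEffect N v k).rank ≤ 1 := by
  rw [frameEffect, pureState, ← smul_vecMulVec]
  exact rank_vecMulVec_le _ _

lemma sum_frameEffect_eq_one [Fintype ι] (hN : N ≠ 0) {v : ι → Fin d → ℂ}
    (hv : ∑ k, pureState (v k) = (N : ℂ) • 1) : ∑ k, frameEffect N v k = 1 := by
  simp only [frameEffect]
  rw [← Finset.smul_sum, hv, inv_smul_smul₀ (Complex.ofReal_ne_zero.mpr hN)]

lemma trace_mul_frameEffect_eq_zero_iff (hN : N ≠ 0) (X : Matrix (Fin d) (Fin d) ℂ)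
    (v : ι → Fin d → ℂ) (k : ι) :
    (X * frameEffect N v k).trace = 0 ↔ star (v k) ⬝ᵥ X *ᵥ v k = 0 := by
  rw [frameEffect, pureState, Matrix.mul_smul, trace_smul, mul_vecMulVec, trace_vecMulVec,
    dotProduct_comm, smul_eq_zero_iff_right (inv_ne_zero (Complex.ofReal_ne_zero.mpr hN))]

end FrameEffect

section SignFrame

variable {a b : ℂ} {X : Matrix (Fin 3) (Fin 3) ℂ}

/-- The four vectors `(±a, ±b, 1)`. -/
def signOrbit (a b : ℂ) : Fin 4 → Fin 3 → ℂ :=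
  ![![a, b, 1], ![a, -b, 1], ![-a, b, 1], ![-a, -b, 1]]

/-- The eight vectors `(±a, ±b, 1)` and `(±b, ±a, 1)`: the orbit of `(a, b, 1)` under the signed
permutations of the first two coordinates. -/
def signedPermOrbit (a b : ℂ) : Fin (4 + 4) → Fin 3 → ℂ :=
  Fin.append (signOrbit a b) (signOrbit b a)

lemma sum_pureState_signOrbit (a b : ℂ) :
    ∑ k, pureState (signOrbit a b k) = (4 : ℂ) • diagonal ![star a * a, star b * b, 1] := by
  ext i j
  simp only [Matrix.sum_apply, pureState, vecMulVec_apply, Fin.sum_univ_four, Matrix.smul_apply]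
  fin_cases i <;> fin_cases j <;> simp [signOrbit] <;> ring

lemma sum_pureState_signedPermOrbit (hnorm : star a * a + star b * b = 2) :
    ∑ k, pureState (signedPermOrbit a b k) = (8 : ℂ) • 1 := by
  simp only [signedPermOrbit, Fin.sum_univ_add, Fin.append_left, Fin.append_right,
    sum_pureState_signOrbit]
  have diagonal_entries i :
      ![star a * a, star b * b, 1] i + ![star b * b, star a * a, 1] i = 2 := by
    fin_cases i
    exacts [hnorm, (add_comm _ _).trans hnorm, one_add_one_eq_two]
  rw [← smul_add, diagonal_add, funext diagonal_entries, ← smul_one_eq_diagonal, smul_smul]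
  norm_num

lemma sign_components_eq_zero
    (hX : ∀ k, star (signOrbit a b k) ⬝ᵥ X *ᵥ signOrbit a b k = 0) :
    star a * a * X 0 0 + star b * b * X 1 1 + X 2 2 = 0 ∧
      star a * b * X 0 1 + star b * a * X 1 0 = 0 ∧
      star a * X 0 2 + a * X 2 0 = 0 ∧
      star b * X 1 2 + b * X 2 1 = 0 := by
  have hpp := hX 0
  have hpm := hX 1
  have hmp := hX 2
  have hmm := hX 3
  simp only [signOrbit, dotProduct, mulVec, Fin.sum_univ_three, Pi.star_apply, cons_val,
    star_neg, star_one] at hpp hpm hmp hmm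
  refine ⟨?_, ?_, ?_, ?_⟩
  · linear_combination (hpp + hpm + hmp + hmm) / 4
  · linear_combination (hpp - hpm - hmp + hmm) / 4
  · linear_combination (hpp + hpm - hmp - hmm) / 4
  · linear_combination (hpp - hpm + hmp - hmm) / 4

lemma eq_zero_and_eq_zero_of_det_ne_zero {R : Type*} [CommRing R] [NoZeroDivisors R]
    {p q r s x y : R} (hdet : p * s - q * r ≠ 0) (h₁ : p * x + q * y = 0)
    (h₂ : r * x + s * y = 0) : x = 0 ∧ y = 0 := by
  constructor <;> refine (mul_eq_zero_iff_left hdet).mp ?_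
  · linear_combination s * h₁ - q * h₂
  · linear_combination p * h₂ - r * h₁

lemma eq_smul_diagonal_of_signedPermOrbit (hnorm : star a * a + star b * b = 2)
    (hab : star a * a ≠ star b * b) (hphase : (star a * b) ^ 2 ≠ (star b * a) ^ 2)
    (hX : ∀ k, star (signedPermOrbit a b k) ⬝ᵥ X *ᵥ signedPermOrbit a b k = 0) :
    X = X 0 0 • diagonal ![1, 1, -2] := by
  obtain ⟨hdiag, h01, h02, h12⟩ := sign_components_eq_zero (a := a) (b := b) (X := X) fun k ↦ by
    simpa only [signedPermOrbit, Fin.append_left] using hX (Fin.castAdd 4 k)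
  obtain ⟨hdiag', h01', h02', h12'⟩ := sign_components_eq_zero (a := b) (b := a) (X := X) fun k ↦ by
    simpa only [signedPermOrbit, Fin.append_right] using hX (Fin.natAdd 4 k)
  have hdet : star a * b - a * star b ≠ 0 := fun h ↦
    hphase (by linear_combination (star a * b + star b * a) * h)
  obtain ⟨h01, h10⟩ :=
    eq_zero_and_eq_zero_of_det_ne_zero (by rwa [← sq, ← sq, sub_ne_zero]) h01 h01'
  obtain ⟨h02, h20⟩ := eq_zero_and_eq_zero_of_det_ne_zero hdet h02 h02'
  obtain ⟨h12, h21⟩ := eq_zero_and_eq_zero_of_det_ne_zero hdet h12' h12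
  have h11 : X 1 1 = X 0 0 := by
    refine sub_eq_zero.mp ((mul_eq_zero_iff_left (sub_ne_zero.mpr hab)).mp ?_)
    linear_combination hdiag' - hdiag
  have h22 : X 2 2 = X 0 0 * -2 := by
    linear_combination hdiag - star b * b * h11 - X 0 0 * hnorm
  ext i j
  fin_cases i <;> fin_cases j <;> simp [h01, h02, h10, h11, h12, h20, h21, h22]

lemma injOn_trace_mul_signedPermOrbit (hnorm : star a * a + star b * b = 2)
    (hab : star a * a ≠ star b * b) (hphase : (star a * b) ^ 2 ≠ (star b * a) ^ 2) :
    Set.InjOn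
      (fun (A : Matrix (Fin 3) (Fin 3) ℂ) k ↦ (A * frameEffect 8 (signedPermOrbit a b) k).trace)
      {A | A.rank ≤ 1} := by
  refine injOn_trace_mul_of_rank_le fun X hX hrank ↦ ?_
  have hquad k := (trace_mul_frameEffect_eq_zero_iff (by norm_num) X _ k).mp (hX k)
  have hdiag := eq_smul_diagonal_of_signedPermOrbit hnorm hab hphase hquad
  refine eq_zero_of_eq_smul_diagonal_of_rank_lt (fun i ↦ ?_) hdiag ?_
  · fin_cases i <;> simp
  · rw [Fintype.card_fin]
    omega

end SignFrame

theorem stmt_9_general :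
    ∃ F : Fin 8 → Matrix (Fin 3) (Fin 3) ℂ,
      (∀ k, (F k).PosSemidef) ∧ (∀ k, (F k).rank ≤ 1) ∧ (∑ k, F k = 1) ∧
      Set.InjOn (fun (A : Matrix (Fin 3) (Fin 3) ℂ) k ↦ (A * F k).trace) {A | A.rank ≤ 1} := by
  -- `|a|² + |b|² = 2` reads `4² + |1 + i|² = 2 * 3²`.
  -- `hphase` holds because `4 * (1 + i)` is off both axes.
  let a : ℂ := 4 / 3
  let b : ℂ := (1 + Complex.I) / 3
  have ha : star a = a := by simp [a]
  have hb : star b = (1 - Complex.I) / 3 := by simp [b, sub_eq_add_neg]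
  have hI := Complex.I_mul_I
  have hnorm : star a * a + star b * b = 2 := by
    rw [ha, hb]
    grind
  have hab : star a * a ≠ star b * b := by
    rw [ha, hb]
    grind
  have hphase : (star a * b) ^ 2 ≠ (star b * a) ^ 2 := by
    rw [ha, hb]
    grind
  exact ⟨frameEffect 8 (signedPermOrbit a b), posSemidef_frameEffect (by norm_num) _,
    rank_frameEffect_le _ _,
    sum_frameEffect_eq_one (by norm_num) (mod_cast sum_pureState_signedPermOrbit hnorm),
    injOn_trace_mul_signedPermOrbit hnorm hab hphase⟩

theorem stmt_9 :
    ∃ F : Fin 8 → Matrix (Fin 3) (Fin 3) ℂ,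
      (∀ k, (F k).PosSemidef) ∧ (∀ k, (F k).rank ≤ 1) ∧ (∑ k, F k = 1) ∧
      (∀ φ ψ : Fin 3 → ℂ, IsUnitVec φ → IsUnitVec ψ →
        (∀ k, (pureState φ * F k).trace = (pureState ψ * F k).trace) →
        pureState φ = pureState ψ) := by
  obtain ⟨F, hpos, hrank, hsum, hinj⟩ := stmt_9_general
  exact ⟨F, hpos, hrank, hsum, fun φ ψ _ _ h ↦
    hinj (rank_pureState_le φ) (rank_pureState_le ψ) (funext h)⟩
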